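/- Let N ≥ d ≥ 1, let s : ℤ/dℤ → ℤ/Nℤ be injective, let {x_k}_{k ∈ ℤ/Nℤ} be the associated DFT frame for ℂ^d, and let F be the associated vector-valued DFT. Then F is invertible if and only if gcd(s(n), N) = 1 for every n ∈ ℤ/dℤ. In that case the inverse is given by u(m) = (1/N) ∑_{p=0}^{N-1} û(p) ⊙ x_{mp} for all m ∈ ℤ/Nℤ, and moreover F*F = FF* = N·I, where F* is the adjoint of F with respect to the ℓ² inner product and I is the identity operator. -/

import Mathlib

/-- The DFT frame vector `x_m = (e^{2πi m s(0)/N}, …, e^{2πi m s(d-1)/N}) ∈ ℂ^d`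
associated with an injective map `s : ℤ/dℤ → ℤ/Nℤ`, viewed as a function `ℤ/dℤ → ℂ`. -/
noncomputable def dftVec (N d : ℕ) (s : ZMod d → ZMod N) (m : ZMod N) : ZMod d → ℂ :=
  fun p => Complex.exp (2 * Real.pi * Complex.I * (m.val : ℂ) * ((s p).val : ℂ) / (N : ℂ))

/-- The vector-valued DFT: `F(u)(n) = ∑_{m} u(m) ⊙ x_{-mn}`, where `⊙` is the
coordinatewise product of vectors in `ℂ^d`. -/
noncomputable def vvDFT (N d : ℕ) [NeZero N] (s : ZMod d → ZMod N)
    (u : ZMod N → ZMod d → ℂ) : ZMod N → ZMod d → ℂ :=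
  fun n => ∑ m : ZMod N, u m * dftVec N d s (-(m * n))

/-- The `ℓ²` inner product `⟨u, v⟩ = ∑_m ∑_p u(m)(p) conj(v(m)(p))` on
`ℓ²(ℤ/Nℤ × ℤ/dℤ)`, the space of functions `ℤ/Nℤ → ℂ^d`. -/
noncomputable def l2Inner (N d : ℕ) [NeZero N] [NeZero d]
    (u v : ZMod N → ZMod d → ℂ) : ℂ :=
  ∑ m : ZMod N, ∑ p : ZMod d, u m p * (starRingEnd ℂ) (v m p)

/-!
Read in the coordinate `p`, the operator `F` is the scalar discrete Fourier transform `𝓕` followed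
by precomposition with multiplication by `a = s p`. Since `𝓕` is bijective, so is `F` exactly when
each multiplication `n ↦ n * s p` is a bijection of `ℤ/Nℤ`, that is, when each `s p` is a unit.
Replacing `s` by `-s` conjugates the kernel, so the adjoint of `F` is the transform attached to
`-s`; the Fourier inversion formula, with a change of variables by the unit `a`, evaluates the
composite of the two transforms as multiplication by `N`.
-/

section DilatedDFT

open ZMod

variable {N : ℕ} [NeZero N] {E : Type*}

/-- The discrete Fourier transform sampled along multiples of `a`, i.e. `n ↦ 𝓕 Φ (n * a)`. For
`a = s p` this is the vector-valued DFT read in the coordinate `p`. -/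
noncomputable def dilatedDFT [AddCommGroup E] [Module ℂ E] (a : ZMod N) (Φ : ZMod N → E) :
    ZMod N → E :=
  fun n => 𝓕 Φ (n * a)

theorem dilatedDFT_apply [AddCommGroup E] [Module ℂ E] (a : ZMod N) (Φ : ZMod N → E)
    (n : ZMod N) : dilatedDFT a Φ n = ∑ m, stdAddChar (-(m * n * a)) • Φ m := by
  simp only [dilatedDFT, dft_apply, mul_assoc]

theorem injective_dilatedDFT_iff [AddCommGroup E] [Module ℂ E] [Nontrivial E] {a : ZMod N} :
    Function.Injective (dilatedDFT (E := E) a) ↔ IsUnit a := by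
  calc Function.Injective (dilatedDFT (E := E) a)
    _ ↔ Function.Injective fun Ψ : ZMod N → E => Ψ ∘ (· * a) :=
        Function.Injective.of_comp_iff' (fun Ψ : ZMod N → E => Ψ ∘ (· * a)) dft.bijective
    _ ↔ Function.Surjective (· * a) := Function.injective_comp_right_iff_surjective
    _ ↔ Function.Bijective (· * a) := Finite.surjective_iff_bijective
    _ ↔ IsUnit a := IsUnit.isUnit_iff_mulRight_bijective.symm

theorem bijective_dilatedDFT [AddCommGroup E] [Module ℂ E] {a : ZMod N} (ha : IsUnit a) :
    Function.Bijective (dilatedDFT (E := E) a) :=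
  (IsUnit.isUnit_iff_mulRight_bijective.mp ha).comp_right.comp dft.bijective

theorem dilatedDFT_neg_dilatedDFT [AddCommGroup E] [Module ℂ E] {a : ZMod N} (ha : IsUnit a)
    (Φ : ZMod N → E) : dilatedDFT (-a) (dilatedDFT a Φ) = (N : ℂ) • Φ := by
  obtain ⟨a, rfl⟩ := ha
  funext m
  calc dilatedDFT (-a : ZMod N) (dilatedDFT (a : ZMod N) Φ) m
    _ = 𝓕 (fun n => 𝓕 Φ (a.val * n)) (m * -a.val) := by simp only [mul_comm a.val]; rfl
    _ = 𝓕 (𝓕 Φ) (a⁻¹.val * (m * -a.val)) := dft_comp_unitMul ..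
    _ = 𝓕 (𝓕 Φ) (-m) := by rw [mul_neg, mul_neg, mul_left_comm, a.inv_mul, mul_one]
    _ = (N : ℂ) • Φ m := by simp only [dft_dft, neg_neg]

theorem sum_inner_dilatedDFT_right [NormedAddCommGroup E] [InnerProductSpace ℂ E] (a : ZMod N)
    (Φ Ψ : ZMod N → E) :
    ∑ n, inner ℂ (Ψ n) (dilatedDFT a Φ n) = ∑ m, inner ℂ (dilatedDFT (-a) Ψ m) (Φ m) := by
  simp_rw [dilatedDFT_apply, inner_sum, sum_inner, inner_smul_left, inner_smul_right]
  rw [Finset.sum_comm]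
  refine Finset.sum_congr rfl fun m _ => Finset.sum_congr rfl fun n _ => ?_
  rw [← AddChar.map_neg_eq_conj, neg_neg, mul_neg, mul_comm m n]

end DilatedDFT

section VectorValuedDFT

variable {N d : ℕ} [NeZero N] {s : ZMod d → ZMod N}

theorem dftVec_apply (s : ZMod d → ZMod N) (m : ZMod N) (p : ZMod d) :
    dftVec N d s m p = ZMod.stdAddChar (m * s p) := by
  have hcast : m * s p = ((m.val * (s p).val : ℤ) : ZMod N) := by simp
  rw [hcast, ZMod.stdAddChar_coe, dftVec]
  push_cast
  ring_nf

theorem dftVec_neg_neg (s : ZMod d → ZMod N) (m : ZMod N) :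
    dftVec N d (-s) (-m) = dftVec N d s m := by
  funext p
  rw [dftVec_apply, dftVec_apply, Pi.neg_apply, neg_mul_neg]

theorem vvDFT_apply (s : ZMod d → ZMod N) (u : ZMod N → ZMod d → ℂ) (n : ZMod N) (p : ZMod d) :
    vvDFT N d s u n p = dilatedDFT (s p) (fun m => u m p) n := by
  simp only [vvDFT, Finset.sum_apply, Pi.mul_apply, dftVec_apply, dilatedDFT_apply, smul_eq_mul,
    neg_mul, mul_comm (u _ p)]

theorem vvDFT_eq_comp (s : ZMod d → ZMod N) :
    vvDFT N d s = Function.swap ∘ Pi.map (fun p => dilatedDFT (s p)) ∘ Function.swap := by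
  funext u n p
  exact vvDFT_apply s u n p

theorem bijective_vvDFT_iff : Function.Bijective (vvDFT N d s) ↔ ∀ p, IsUnit (s p) := by
  rw [vvDFT_eq_comp, Function.swap_bijective.of_comp_iff',
    Function.Bijective.of_comp_iff _ Function.swap_bijective]
  refine ⟨fun h p => ?_, fun hs => .piMap fun p => bijective_dilatedDFT (hs p)⟩
  exact injective_dilatedDFT_iff.mp (Pi.map_injective.mp h.injective p)

theorem vvDFT_neg_vvDFT (hs : ∀ p, IsUnit (s p)) (u : ZMod N → ZMod d → ℂ) :
    vvDFT N d (-s) (vvDFT N d s u) = (N : ℂ) • u := by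
  funext m p
  simp only [vvDFT_apply, Pi.neg_apply]
  exact congrFun (dilatedDFT_neg_dilatedDFT (hs p) fun m => u m p) m

theorem vvDFT_vvDFT_neg (hs : ∀ p, IsUnit (s p)) (u : ZMod N → ZMod d → ℂ) :
    vvDFT N d s (vvDFT N d (-s) u) = (N : ℂ) • u := by
  simpa only [neg_neg] using vvDFT_neg_vvDFT (s := -s) (fun p => (hs p).neg) u

theorem l2Inner_vvDFT_left [NeZero d] (s : ZMod d → ZMod N) (u v : ZMod N → ZMod d → ℂ) :
    l2Inner N d (vvDFT N d s u) v = l2Inner N d u (vvDFT N d (-s) v) := by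
  rw [l2Inner, l2Inner, Finset.sum_comm, Finset.sum_comm (γ := ZMod N)]
  simp only [vvDFT_apply, Pi.neg_apply, ← RCLike.inner_apply]
  exact Finset.sum_congr rfl fun p _ => sum_inner_dilatedDFT_right (s p) _ _

theorem inv_smul_sum_vvDFT_mul_dftVec (hs : ∀ p, IsUnit (s p)) (u : ZMod N → ZMod d → ℂ)
    (m : ZMod N) : (N : ℂ)⁻¹ • ∑ p, vvDFT N d s u p * dftVec N d s (m * p) = u m := by
  have hsum : ∑ p, vvDFT N d s u p * dftVec N d s (m * p) =
      vvDFT N d (-s) (vvDFT N d s u) m := by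
    simp only [vvDFT, dftVec_neg_neg, mul_comm m]
  rw [hsum, vvDFT_neg_vvDFT hs, Pi.smul_apply, inv_smul_smul₀ (NeZero.ne _)]

end VectorValuedDFT

theorem stmt_3_general (N d : ℕ) [NeZero N] [NeZero d] (s : ZMod d → ZMod N) :
    (Function.Bijective (vvDFT N d s) ↔ ∀ n : ZMod d, Nat.Coprime ((s n).val) N) ∧
    ((∀ n : ZMod d, Nat.Coprime ((s n).val) N) →
      (∀ (u : ZMod N → ZMod d → ℂ) (m : ZMod N),
        u m = (N : ℂ)⁻¹ • ∑ p : ZMod N, vvDFT N d s u p * dftVec N d s (m * p)) ∧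
      ∃ Fstar : (ZMod N → ZMod d → ℂ) → (ZMod N → ZMod d → ℂ),
        (∀ u v, l2Inner N d (vvDFT N d s u) v = l2Inner N d u (Fstar v)) ∧
        (∀ u, Fstar (vvDFT N d s u) = (N : ℂ) • u) ∧
        (∀ u, vvDFT N d s (Fstar u) = (N : ℂ) • u)) := by
  have isUnit_iff_coprime (n : ZMod d) : IsUnit (s n) ↔ (s n).val.Coprime N := by
    rw [← ZMod.isUnit_iff_coprime, ZMod.natCast_zmod_val]
  simp_rw [← isUnit_iff_coprime]
  refine ⟨bijective_vvDFT_iff, fun hunit => ⟨fun u m => ?_, vvDFT N d (-s), ?_, ?_, ?_⟩⟩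
  · exact (inv_smul_sum_vvDFT_mul_dftVec hunit u m).symm
  · exact l2Inner_vvDFT_left s
  · exact vvDFT_neg_vvDFT hunit
  · exact vvDFT_vvDFT_neg hunit

/-- For `N ≥ d ≥ 1` and injective `s : ℤ/dℤ → ℤ/Nℤ`, the vector-valued DFT `F`
associated with the DFT frame `{x_k}` is invertible iff `gcd(s(n), N) = 1` for all `n`;
in that case `u(m) = (1/N) ∑_p û(p) ⊙ x_{mp}`, and `F*F = FF* = N·I` where `F*` is the
adjoint of `F` with respect to the `ℓ²` inner product. -/
theorem stmt_3 (N d : ℕ) [NeZero N] [NeZero d] (hdN : d ≤ N)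
    (s : ZMod d → ZMod N) (hs : Function.Injective s) :
    (Function.Bijective (vvDFT N d s) ↔ ∀ n : ZMod d, Nat.Coprime ((s n).val) N) ∧
    ((∀ n : ZMod d, Nat.Coprime ((s n).val) N) →
      (∀ (u : ZMod N → ZMod d → ℂ) (m : ZMod N),
        u m = (N : ℂ)⁻¹ • ∑ p : ZMod N, vvDFT N d s u p * dftVec N d s (m * p)) ∧
      ∃ Fstar : (ZMod N → ZMod d → ℂ) → (ZMod N → ZMod d → ℂ),
        (∀ u v, l2Inner N d (vvDFT N d s u) v = l2Inner N d u (Fstar v)) ∧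
        (∀ u, Fstar (vvDFT N d s u) = (N : ℂ) • u) ∧
        (∀ u, vvDFT N d s (Fstar u) = (N : ℂ) • u)) :=
  stmt_3_general N d s
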